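/- For each r ≥ 0, the collection of left-to-right products ψ_{a₁} * ψ_{a₂} * ⋯ * ψ_{a_r}, taken over all strictly increasing sequences 0 ≤ a₁ < a₂ < ⋯ < a_r of nonnegative integers, forms a ℚ-vector-space basis of ℋ_r(A₁) (the symmetric polynomials in x₁,…,x_r over ℚ). In particular, ℋ(A₁) is generated as an algebra under * by ℋ₁(A₁): every symmetric polynomial in x₁,…,x_r over ℚ is a ℚ-linear combination of r-fold products ψ_{a₁} * ⋯ * ψ_{a_r}. -/

import Mathlib

open MvPolynomial
open scoped Classical

/-- A finite quiver with vertex set `Fin n`: a finite type of arrows together with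
head and tail maps. -/
structure FinQuiver (n : ℕ) where
  Arr : Type
  [fintypeArr : Fintype Arr]
  hd : Arr → Fin n
  tl : Arr → Fin n

attribute [instance] FinQuiver.fintypeArr

variable {n : ℕ}

/-- `Q` is acyclic: there is no oriented cycle, i.e. no path
`a₁, …, a_{k+1}` (with `hd aₘ = tl aₘ₊₁`) whose final head equals its initial tail. -/
def FinQuiver.Acyclic (Q : FinQuiver n) : Prop :=
  ∀ (k : ℕ) (c : Fin (k + 1) → Q.Arr),
    (∀ m : Fin k, Q.hd (c m.castSucc) = Q.tl (c m.succ)) →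
    Q.hd (c (Fin.last k)) ≠ Q.tl (c 0)

/-- The Euler form `χ_Q` of the quiver `Q`. -/
def FinQuiver.euler (Q : FinQuiver n) (α β : Fin n → ℕ) : ℤ :=
  ∑ i : Fin n, (α i : ℤ) * β i - ∑ a : Q.Arr, (α (Q.tl a) : ℤ) * β (Q.hd a)

/-- The opposite antisymmetrization `⟨α,β⟩ = χ_Q(β,α) − χ_Q(α,β)`. -/
def FinQuiver.lam (Q : FinQuiver n) (α β : Fin n → ℕ) : ℤ :=
  Q.euler β α - Q.euler α β

/-- The polynomial ring in the variables `ω_{i,j}`, `i ∈ Q₀`, `j ∈ ℕ` (0-indexed). -/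
abbrev PolyQ (n : ℕ) := MvPolynomial (Fin n × ℕ) ℚ

/-- The permutation of the variables at vertex `i` induced by a permutation of `ℕ`. -/
def vertexPerm (i : Fin n) (σ : Equiv.Perm ℕ) : Fin n × ℕ → Fin n × ℕ :=
  fun p => if p.1 = i then (i, σ p.2) else p

/-- `f` is, for each vertex `i`, symmetric in the variables `ω_{i,0},…,ω_{i,γ i − 1}`. -/
def SymmIn (γ : Fin n → ℕ) (f : PolyQ n) : Prop :=
  ∀ (i : Fin n) (σ : Equiv.Perm ℕ),
    (∀ j : ℕ, σ j ≠ j → j < γ i) → rename (vertexPerm i σ) f = f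

lemma vars_smul_subset (c : ℚ) (f : PolyQ n) : (c • f).vars ⊆ f.vars := by
  rw [MvPolynomial.smul_eq_C_mul]
  refine (MvPolynomial.vars_mul _ _).trans ?_
  simp [MvPolynomial.vars_C]

/-- `ℋ_γ`: polynomials using only the variables `ω_{i,j}`, `j < γ i`, which are
symmetric at each vertex.  A `ℚ`-submodule of `PolyQ n`. -/
noncomputable def Hspace (γ : Fin n → ℕ) : Submodule ℚ (PolyQ n) where
  carrier := {f | (∀ p ∈ f.vars, p.2 < γ p.1) ∧ SymmIn γ f}
  add_mem' := by
    rintro f g ⟨hf1, hf2⟩ ⟨hg1, hg2⟩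
    refine ⟨fun p hp => ?_, fun i σ hσ => ?_⟩
    · rcases Finset.mem_union.mp (MvPolynomial.vars_add_subset f g hp) with h | h
      exacts [hf1 p h, hg1 p h]
    · rw [map_add, hf2 i σ hσ, hg2 i σ hσ]
  zero_mem' := by
    refine ⟨fun p hp => ?_, fun i σ hσ => map_zero _⟩
    simp [MvPolynomial.vars_0] at hp
  smul_mem' := by
    rintro c f ⟨hf1, hf2⟩
    refine ⟨fun p hp => hf1 p (vars_smul_subset c f hp), fun i σ hσ => ?_⟩
    rw [map_smul, hf2 i σ hσ]

/-- Polynomials all of whose variables sit at vertex `i`. -/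
noncomputable def onlyVertex (i : Fin n) : Submodule ℚ (PolyQ n) where
  carrier := {f | ∀ p ∈ f.vars, p.1 = i}
  add_mem' := by
    intro f g hf hg p hp
    rcases Finset.mem_union.mp (MvPolynomial.vars_add_subset f g hp) with h | h
    exacts [hf p h, hg p h]
  zero_mem' := by
    intro p hp
    simp [MvPolynomial.vars_0] at hp
  smul_mem' := by
    intro c f hf p hp
    exact hf p (vars_smul_subset c f hp)

/-- `𝒜_{β,m}`: the subspace of `ℋ_{m·β}` of polynomials depending only on the
variables `ω_{i,0},…,ω_{i,m−1}` at the distinguished vertex `i`. -/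
noncomputable def Aspace (β : Fin n → ℕ) (i : Fin n) (m : ℕ) : Submodule ℚ (PolyQ n) :=
  Hspace (fun v => m * β v) ⊓ onlyVertex i

/-- Substitute for the `j`-th variable at vertex `i` the variable `ω_{i,s}` where `s`
is the `j`-th element of `T i` in increasing order. -/
noncomputable def substAlong (T : Fin n → Finset ℕ) : PolyQ n →ₐ[ℚ] PolyQ n :=
  aeval fun p : Fin n × ℕ => X (p.1, ((T p.1).sort (· ≤ ·)).getD p.2 0)

/-- The index set of the Kontsevich–Soibelman localization sum:
for each vertex, a `γ₁ i`-element subset of `{0,…,γ₁ i + γ₂ i − 1}`. -/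
def shuffles (γ₁ γ₂ : Fin n → ℕ) : Finset (Fin n → Finset ℕ) :=
  Fintype.piFinset fun i => (Finset.range (γ₁ i + γ₂ i)).powerset.filter fun s => s.card = γ₁ i

def shuffleCompl (γ₁ γ₂ : Fin n → ℕ) (S : Fin n → Finset ℕ) : Fin n → Finset ℕ :=
  fun i => Finset.range (γ₁ i + γ₂ i) \ S i

/-- The numerator factor attached to the arrow `a`:
`∏_{j' ∈ S̄_{h a}} ∏_{j ∈ S_{t a}} (ω_{h a, j'} − ω_{t a, j})`. -/
noncomputable def arrowFactor (Q : FinQuiver n) (γ₁ γ₂ : Fin n → ℕ)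
    (S : Fin n → Finset ℕ) (a : Q.Arr) : PolyQ n :=
  ∏ j' ∈ shuffleCompl γ₁ γ₂ S (Q.hd a), ∏ j ∈ S (Q.tl a),
    (X (Q.hd a, j') - X (Q.tl a, j))

noncomputable def interactionNum (Q : FinQuiver n) (γ₁ γ₂ : Fin n → ℕ)
    (S : Fin n → Finset ℕ) : PolyQ n :=
  ∏ a : Q.Arr, arrowFactor Q γ₁ γ₂ S a

noncomputable def interactionDen (γ₁ γ₂ : Fin n → ℕ) (S : Fin n → Finset ℕ) : PolyQ n :=
  ∏ i : Fin n, ∏ j' ∈ shuffleCompl γ₁ γ₂ S i, ∏ j ∈ S i, (X (i, j') - X (i, j))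

/-- The Kontsevich–Soibelman localization sum, an element of the field of rational
functions (the fraction field of `PolyQ n`). -/
noncomputable def cohaMulRat (Q : FinQuiver n) (γ₁ γ₂ : Fin n → ℕ) (f₁ f₂ : PolyQ n) :
    FractionRing (PolyQ n) :=
  ∑ S ∈ shuffles γ₁ γ₂,
    algebraMap (PolyQ n) (FractionRing (PolyQ n))
        (substAlong S f₁ * substAlong (shuffleCompl γ₁ γ₂ S) f₂ * interactionNum Q γ₁ γ₂ S) /
      algebraMap (PolyQ n) (FractionRing (PolyQ n)) (interactionDen γ₁ γ₂ S)

/-- The CoHA product `f₁ * f₂`: the unique polynomial representing the localization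
sum (and `0` if the sum were not a polynomial, which never happens). -/
noncomputable def cohaMul (Q : FinQuiver n) (γ₁ γ₂ : Fin n → ℕ) (f₁ f₂ : PolyQ n) : PolyQ n :=
  if h : ∃ P : PolyQ n,
      algebraMap (PolyQ n) (FractionRing (PolyQ n)) P = cohaMulRat Q γ₁ γ₂ f₁ f₂ then
    h.choose
  else 0

/-- Iterated, left-to-right, CoHA product of a list of dimension-vector/polynomial pairs.
Returns the total dimension vector together with the product. -/
noncomputable def cohaProd (Q : FinQuiver n) :
    List ((Fin n → ℕ) × PolyQ n) → (Fin n → ℕ) × PolyQ n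
  | [] => (fun _ => 0, 1)
  | x :: xs => xs.foldl (fun acc y => (acc.1 + y.1, cohaMul Q acc.1 y.1 acc.2 y.2)) x

/-- Left-to-right CoHA product `f 0 * f 1 * ⋯ * f (r−1)` with `f u ∈ ℋ_{γ u}`. -/
noncomputable def cohaProdFin (Q : FinQuiver n) {r : ℕ} (γ : Fin r → Fin n → ℕ)
    (f : Fin r → PolyQ n) : PolyQ n :=
  (cohaProd Q (List.ofFn fun u => (γ u, f u))).2

/-- The quiver with one vertex and no arrows. -/
def A1 : FinQuiver 1 := { Arr := Empty, hd := Empty.elim, tl := Empty.elim }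

/-- `ψ_p = x₁ ^ p ∈ ℋ₁(A₁)`. -/
noncomputable def psi (p : ℕ) : PolyQ 1 := X ((0 : Fin 1), 0) ^ p

def oneDim : Fin 1 → ℕ := fun _ => 1

/-- The simple dimension vector `e_i`. -/
def simpleDim (i : Fin n) : Fin n → ℕ := fun v => if v = i then 1 else 0

/-- A subquiver of `Q`. -/
structure Subquiver (Q : FinQuiver n) where
  verts : Finset (Fin n)
  arrows : Finset Q.Arr
  hd_mem : ∀ a ∈ arrows, Q.hd a ∈ verts
  tl_mem : ∀ a ∈ arrows, Q.tl a ∈ verts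

def Subquiver.Full {Q : FinQuiver n} (Q' : Subquiver Q) : Prop :=
  ∀ a : Q.Arr, Q.hd a ∈ Q'.verts → Q.tl a ∈ Q'.verts → a ∈ Q'.arrows

/-- Adjacency in the underlying undirected graph of a subquiver. -/
def Subquiver.Adj {Q : FinQuiver n} (Q' : Subquiver Q) (x y : Fin n) : Prop :=
  ∃ a ∈ Q'.arrows, (Q.hd a = x ∧ Q.tl a = y) ∨ (Q.hd a = y ∧ Q.tl a = x)

def Subquiver.Connected {Q : FinQuiver n} (Q' : Subquiver Q) : Prop :=
  ∀ x ∈ Q'.verts, ∀ y ∈ Q'.verts, Relation.ReflTransGen Q'.Adj x y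

/-- The Euler form of the subquiver `Q'` (on `ℤ`-valued vectors). -/
def Subquiver.eulerZ {Q : FinQuiver n} (Q' : Subquiver Q) (α β : Fin n → ℤ) : ℤ :=
  ∑ i ∈ Q'.verts, α i * β i - ∑ a ∈ Q'.arrows, α (Q.tl a) * β (Q.hd a)

/-- Positive definiteness of the Tits form of `Q'` on vectors supported on `Q'`. -/
def Subquiver.PosDefTits {Q : FinQuiver n} (Q' : Subquiver Q) : Prop :=
  ∀ β : Fin n → ℤ, (∀ i, i ∉ Q'.verts → β i = 0) → β ≠ 0 → 0 < Q'.eulerZ β β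

/-- A connected full subquiver with positive definite Tits form. -/
def Subquiver.IsDynkin {Q : FinQuiver n} (Q' : Subquiver Q) : Prop :=
  Q'.Connected ∧ Q'.Full ∧ Q'.PosDefTits

/-- A positive root of `Q'`: a nonzero dimension vector supported on `Q'` with
Tits form equal to `1`. -/
def Subquiver.IsPosRoot {Q : FinQuiver n} (Q' : Subquiver Q) (β : Fin n → ℕ) : Prop :=
  (∀ i, i ∉ Q'.verts → β i = 0) ∧ β ≠ 0 ∧
    Q'.eulerZ (fun i => (β i : ℤ)) (fun i => (β i : ℤ)) = 1

/-- A subquiver regarded as a quiver in its own right (on the ambient vertex set). -/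
def Subquiver.toQuiver {Q : FinQuiver n} (Q' : Subquiver Q) : FinQuiver n :=
  { Arr := {a : Q.Arr // a ∈ Q'.arrows}, hd := fun a => Q.hd a.1, tl := fun a => Q.tl a.1 }

/-- An (ordered list) subquiver partition `𝒬• = (Q¹,…,Q^ℓ)`: nonempty connected
subquivers whose vertex sets partition `Q₀`. -/
structure SubqPartition (Q : FinQuiver n) (ℓ : ℕ) where
  part : Fin ℓ → Subquiver Q
  nonempty' : ∀ j, (part j).verts.Nonempty
  connected' : ∀ j, (part j).Connected
  cover : ∀ i : Fin n, ∃! j, i ∈ (part j).verts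

/-- The set `𝒬•₁` of arrows belonging to one of the parts. -/
noncomputable def SubqPartition.arrs {Q : FinQuiver n} {ℓ : ℕ} (P : SubqPartition Q ℓ) : Finset Q.Arr :=
  Finset.univ.biUnion fun j => (P.part j).arrows

/-- The partition is admissible and ordered: every arrow not inside a part goes from a
later part to an earlier part (head before tail). -/
def SubqPartition.Ordered {Q : FinQuiver n} {ℓ : ℕ} (P : SubqPartition Q ℓ) : Prop :=
  ∀ a : Q.Arr, a ∉ P.arrs → ∀ i j : Fin ℓ,
    Q.hd a ∈ (P.part i).verts → Q.tl a ∈ (P.part j).verts → i < j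

/-- Every part is a Dynkin subquiver. -/
def SubqPartition.Dynkin {Q : FinQuiver n} {ℓ : ℕ} (P : SubqPartition Q ℓ) : Prop :=
  ∀ j, (P.part j).IsDynkin

/-- `β : Fin r → (Fin n → ℕ)` is a Reineke-ordered enumeration of `Φ₊(𝒬•)`, with
`blk u` the part to which `β u` belongs: block-monotone, enumerating all positive roots
without repetition, and within each block `u < v → ⟨β u, β v⟩ ≥ 0`. -/
def IsReinekeOrder {Q : FinQuiver n} {ℓ : ℕ} (P : SubqPartition Q ℓ) {r : ℕ}
    (β : Fin r → Fin n → ℕ) (blk : Fin r → Fin ℓ) : Prop :=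
  Monotone blk ∧
  (∀ u, (P.part (blk u)).IsPosRoot (β u)) ∧
  Function.Injective β ∧
  (∀ j (b : Fin n → ℕ), (P.part j).IsPosRoot b → ∃ u, β u = b) ∧
  (∀ u v : Fin r, u < v → blk u = blk v → 0 ≤ Q.lam (β u) (β v))

/-!
The product `ψ_{a₁} * ⋯ * ψ_{a_r}` is the Schur polynomial `det (x_i ^ a_j) / ∏_{i<j} (x_j - x_i)`:
on alternants, multiplying by `ψ_p` in the CoHA is the Laplace expansion along the last column.
Multiplication by the Vandermonde determinant `V` is injective from symmetric to alternating
polynomials, and an alternating polynomial is determined by its coefficients at strictly increasing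
exponents. Hence the functionals `f ↦ [x ^ b] (V f)` separate symmetric polynomials, and they are
dual to the Schur polynomials because `x ^ a` is the only monomial of `det (x_i ^ a_j)` whose
exponents are strictly increasing.
-/

section Alternant

variable {ι R : Type*} [Fintype ι] [DecidableEq ι] [CommRing R]

/-- The alternant `det (x i ^ a j)`, a generalized Vandermonde determinant. -/
noncomputable def alternant (x : ι → R) (a : ι → ℕ) : R :=
  (Matrix.of fun i j => x i ^ a j).det

lemma alternant_val {r : ℕ} (x : Fin r → R) :
    alternant x Fin.val = (Matrix.vandermonde x).det :=
  rfl

lemma alternant_succ {r : ℕ} (x : Fin (r + 1) → R) (a : Fin (r + 1) → ℕ) :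
    alternant x a = ∑ k : Fin (r + 1), (-1) ^ (k + r : ℕ) * x k ^ a (Fin.last r) *
      alternant (x ∘ k.succAbove) (a ∘ Fin.castSucc) := by
  rw [alternant, Matrix.det_succ_column _ (Fin.last r)]
  refine Finset.sum_congr rfl fun k _ => ?_
  rw [Fin.succAbove_last]
  rfl

lemma det_vandermonde_cons {r : ℕ} (c : R) (x : Fin r → R) :
    (Matrix.vandermonde (Fin.cons c x)).det =
      (∏ i, (x i - c)) * (Matrix.vandermonde x).det := by
  rw [Matrix.det_vandermonde, Matrix.det_vandermonde, Fin.prod_univ_succ]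
  simp [Fin.prod_Ioi_succ]

lemma det_vandermonde_eq_mul_comp_succAbove {r : ℕ} (x : Fin (r + 1) → R) (k : Fin (r + 1)) :
    (Matrix.vandermonde x).det = (-1) ^ (k + r : ℕ) *
      ((∏ i, (x k - x (k.succAbove i))) * (Matrix.vandermonde (x ∘ k.succAbove)).det) := by
  have hcons : x = Fin.cons (x k) (x ∘ k.succAbove) ∘ k.cycleRange := by
    rw [← Equiv.comp_symm_eq]
    ext i
    cases i using Fin.cases <;> simp
  have hneg : ∏ i, (x (k.succAbove i) - x k) = (-1) ^ r * ∏ i, (x k - x (k.succAbove i)) := by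
    simp_rw [← neg_sub (x k), Finset.prod_neg, Finset.card_univ, Fintype.card_fin]
  calc (Matrix.vandermonde x).det
      = (Matrix.vandermonde (Fin.cons (x k) (x ∘ k.succAbove) ∘ k.cycleRange)).det := by
        rw [← hcons]
    _ = Equiv.Perm.sign k.cycleRange *
          (Matrix.vandermonde (Fin.cons (x k) (x ∘ k.succAbove))).det :=
        Matrix.det_permute k.cycleRange (Matrix.vandermonde _)
    _ = _ := by
        rw [det_vandermonde_cons]
        simp [Fin.sign_cycleRange, hneg, pow_add, mul_assoc]

end Alternant

section Bialternant

variable {R S : Type*} [CommRing R] [CommRing S] {r : ℕ}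

/-- The quotient of the alternant `det (x i ^ a j)` by the Vandermonde determinant, i.e. the Schur
polynomial `s_λ(x)` when `a j = λ_{r-j} + j`. To make sense over any commutative ring it is defined
without division, by reducing the powers `T ^ a j` modulo `∏ i, (T - x i)`. -/
noncomputable def bialternant (x : Fin r → R) (a : Fin r → ℕ) : R :=
  (Matrix.of fun k j : Fin r =>
    (Polynomial.X ^ a j %ₘ Lagrange.nodal Finset.univ x).coeff k).det

lemma sum_coeff_modByMonic_nodal_mul_pow (x : Fin r → R) (p : Polynomial R) (i : Fin r) :
    ∑ k : Fin r, (p %ₘ Lagrange.nodal Finset.univ x).coeff k * x i ^ (k : ℕ) = p.eval (x i) := by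
  nontriviality R
  have hdeg : (p %ₘ Lagrange.nodal Finset.univ x).degree < r := by
    simpa using Polynomial.degree_modByMonic_lt p (Lagrange.nodal_monic (s := Finset.univ) (v := x))
  have hroot : (Lagrange.nodal Finset.univ x).eval (x i) = 0 :=
    Lagrange.eval_nodal_at_node (Finset.mem_univ i)
  rw [Polynomial.sum_fin (fun k c => c * x i ^ k) (by simp) hdeg, ← Polynomial.eval_eq_sum]
  exact Polynomial.eval₂_modByMonic_eq_self_of_root hroot

lemma alternant_eq_det_vandermonde_mul_bialternant (x : Fin r → R) (a : Fin r → ℕ) :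
    alternant x a = (Matrix.vandermonde x).det * bialternant x a := by
  rw [alternant, bialternant, ← Matrix.det_mul]
  congr 1
  ext i j
  simpa [Matrix.mul_apply, mul_comm] using
    (sum_coeff_modByMonic_nodal_mul_pow x (Polynomial.X ^ a j) i).symm

lemma map_bialternant {F : Type*} [FunLike F R S] [RingHomClass F R S] (φ : F) (x : Fin r → R)
    (a : Fin r → ℕ) : φ (bialternant x a) = bialternant (φ ∘ x) a := by
  change (φ : R →+* S) (bialternant x a) = _
  have hnode : (Lagrange.nodal Finset.univ x).map (φ : R →+* S) =
      Lagrange.nodal Finset.univ (φ ∘ x) := by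
    simp [Lagrange.nodal, Polynomial.map_prod]
  rw [bialternant, RingHom.map_det]
  congr 1
  ext k j
  simp only [RingHom.mapMatrix_apply, Matrix.map_apply, Matrix.of_apply, ← Polynomial.coeff_map,
    Polynomial.map_modByMonic _ (Lagrange.nodal_monic), Polynomial.map_pow, Polynomial.map_X,
    hnode]

lemma bialternant_comp_perm (x : Fin r → R) (a : Fin r → ℕ) (σ : Equiv.Perm (Fin r)) :
    bialternant (x ∘ σ) a = bialternant x a := by
  have hnode : Lagrange.nodal Finset.univ (x ∘ σ) = Lagrange.nodal Finset.univ x :=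
    Equiv.prod_comp σ fun i => Polynomial.X - Polynomial.C (x i)
  rw [bialternant, hnode, bialternant]

lemma bialternant_fin_one (x : Fin 1 → R) (a : Fin 1 → ℕ) : bialternant x a = x 0 ^ a 0 := by
  simpa [alternant] using (alternant_eq_det_vandermonde_mul_bialternant x a).symm

lemma sum_bialternant_mul_pow_div_prod_sub {K : Type*} [Field K] {x : Fin (r + 1) → K}
    (hx : Function.Injective x) (a : Fin (r + 1) → ℕ) :
    ∑ k, bialternant (x ∘ k.succAbove) (a ∘ Fin.castSucc) * x k ^ a (Fin.last r) /
      ∏ i, (x k - x (k.succAbove i)) = bialternant x a := by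
  have hV : (Matrix.vandermonde x).det ≠ 0 := Matrix.det_vandermonde_ne_zero_iff.2 hx
  refine mul_left_cancel₀ hV ?_
  rw [← alternant_eq_det_vandermonde_mul_bialternant, alternant_succ, Finset.mul_sum]
  refine Finset.sum_congr rfl fun k _ => ?_
  have hprod : ∏ i, (x k - x (k.succAbove i)) ≠ 0 :=
    Finset.prod_ne_zero_iff.2 fun i _ => sub_ne_zero.2 fun h => Fin.succAbove_ne k i (hx h).symm
  rw [alternant_eq_det_vandermonde_mul_bialternant, det_vandermonde_eq_mul_comp_succAbove x k]
  field_simp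

end Bialternant

section AlternatingSums

open Equiv.Perm

variable {ι α M : Type*} [Fintype ι] [DecidableEq ι] [AddCommGroup M]

lemma sum_sign_smul_comp_perm (G : (ι → α) → M) (d : ι → α) (τ : Equiv.Perm ι) :
    ∑ σ : Equiv.Perm ι, sign σ • G ((d ∘ τ) ∘ σ) =
      sign τ • ∑ σ : Equiv.Perm ι, sign σ • G (d ∘ σ) := by
  rw [Finset.smul_sum]
  refine Fintype.sum_equiv (Equiv.mulLeft τ) _ _ fun σ => ?_
  simp [smul_smul, ← mul_assoc, Function.comp_assoc]

lemma sum_sign_smul_comp_eq_zero (G : (ι → α) → M) {d : ι → α} (hd : ¬ Function.Injective d) :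
    ∑ σ : Equiv.Perm ι, sign σ • G (d ∘ σ) = 0 := by
  obtain ⟨i, j, hdij, hij⟩ := Function.not_injective_iff.1 hd
  have hswap : d ∘ Equiv.swap i j = d := by
    simp [Equiv.comp_swap_eq_update, hdij]
  refine Finset.sum_involution (fun σ _ => Equiv.swap i j * σ) (fun σ _ => ?_) (fun σ _ _ => ?_)
    (fun _ _ => Finset.mem_univ _) (fun σ _ => ?_)
  · rw [Equiv.Perm.coe_mul, ← Function.comp_assoc, hswap]
    simp [hij]
  · simpa using hij
  · simp

lemma sum_sign_smul_comp_eq_zero_of_forall_strictMono {r : ℕ} [LinearOrder α] (G : (Fin r → α) → M)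
    (hG : ∀ b : Fin r → α, StrictMono b → ∑ σ : Equiv.Perm (Fin r), sign σ • G (b ∘ σ) = 0)
    (d : Fin r → α) : ∑ σ : Equiv.Perm (Fin r), sign σ • G (d ∘ σ) = 0 := by
  by_cases hd : Function.Injective d
  · have hsort : StrictMono (d ∘ Tuple.sort d) :=
      (Tuple.monotone_sort d).strictMono_of_injective (hd.comp (Tuple.sort d).injective)
    rw [← smul_eq_zero_iff_eq (sign (Tuple.sort d)), ← sum_sign_smul_comp_perm]
    exact hG _ hsort
  · exact sum_sign_smul_comp_eq_zero G hd

end AlternatingSums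

section SymmetricPolynomials

open Finsupp in
lemma coeff_rename_perm {ι R : Type*} [Finite ι] [CommSemiring R] (σ : Equiv.Perm ι)
    (p : MvPolynomial ι R) (d : ι → ℕ) :
    coeff (equivFunOnFinite.symm d) (rename σ p) = coeff (equivFunOnFinite.symm (d ∘ σ)) p := by
  rw [← coeff_rename_mapDomain σ σ.injective p, ← Finsupp.equivMapDomain_eq_mapDomain]
  congr 1
  ext i
  simp

open Finsupp Equiv.Perm in
lemma coeff_alternant_X_mul {ι R : Type*} [Fintype ι] [DecidableEq ι] [CommRing R]
    {f : MvPolynomial ι R} (hf : f.IsSymmetric) (a d : ι → ℕ) :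
    coeff (equivFunOnFinite.symm d) (alternant X a * f) =
      ∑ σ : Equiv.Perm ι, sign σ •
        coeff (equivFunOnFinite.symm (d ∘ σ)) (monomial (equivFunOnFinite.symm a) 1 * f) := by
  have hterm (σ : Equiv.Perm ι) :
      (∏ i, X (σ i) ^ a i) * f = rename σ (monomial (equivFunOnFinite.symm a) 1 * f) := by
    rw [map_mul, hf σ, monomial_eq, Finsupp.prod_fintype _ _ (by simp)]
    simp
  rw [alternant, Matrix.det_apply, Finset.sum_mul, coeff_sum]
  refine Finset.sum_congr rfl fun σ _ => ?_
  rw [← coeff_rename_perm, ← hterm, smul_mul_assoc]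
  rcases Int.units_eq_one_or (sign σ) with h | h <;> simp [h]

lemma X_sub_X_mem_nonZeroDivisors {ι R : Type*} [LinearOrder ι] [WellFoundedGT ι] [CommRing R]
    {i j : ι} (hij : i < j) : (X j - X i : MvPolynomial ι R) ∈ nonZeroDivisors _ := by
  nontriviality R
  refine MonomialOrder.lex.mem_nonZeroDivisors_of_leadingCoeff_mem_nonZeroDivisors ?_
  rw [← neg_sub, MonomialOrder.leadingCoeff_neg, MonomialOrder.leadingCoeff_sub_of_lt,
    MonomialOrder.leadingCoeff_X]
  · exact isUnit_one.neg.mem_nonZeroDivisors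
  · rwa [MonomialOrder.degree_X, MonomialOrder.degree_X, MonomialOrder.lex_lt_iff,
      Finsupp.Lex.single_lt_iff]

variable {r : ℕ} {R : Type*} [CommRing R]

open Finsupp in
lemma coeff_alternant_X {a b : Fin r → ℕ} (ha : StrictMono a) (hb : StrictMono b) :
    coeff (equivFunOnFinite.symm b) (alternant (X : Fin r → MvPolynomial (Fin r) R) a) =
      if a = b then 1 else 0 := by
  have hperm (σ : Equiv.Perm (Fin r)) (h : a = b ∘ σ) : σ = 1 := by
    have hab : a = b := (ha.range_inj hb).1 (by rw [h, σ.surjective.range_comp])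
    exact Equiv.ext fun i => hb.injective (congrFun (h.symm.trans hab) i)
  rw [← mul_one (alternant _ _), coeff_alternant_X_mul IsSymmetric.one, Finset.sum_eq_single 1]
  · simp [coeff_monomial]
  · intro σ _ hσ
    have hne : a ≠ b ∘ σ := fun h => hσ (hperm σ h)
    simp [coeff_monomial, hne]
  · simp

variable (r R) in
lemma det_vandermonde_X_mem_nonZeroDivisors :
    (Matrix.vandermonde (X : Fin r → MvPolynomial (Fin r) R)).det ∈ nonZeroDivisors _ := by
  rw [Matrix.det_vandermonde]
  refine prod_mem fun i _ => prod_mem fun j hij => ?_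
  exact X_sub_X_mem_nonZeroDivisors (Finset.mem_Ioi.1 hij)

lemma eq_zero_of_coeff_det_vandermonde_mul {f : MvPolynomial (Fin r) R} (hf : f.IsSymmetric)
    (h : ∀ b : Fin r → ℕ, StrictMono b → coeff (Finsupp.equivFunOnFinite.symm b)
      ((Matrix.vandermonde X).det * f) = 0) : f = 0 := by
  refine (mul_left_mem_nonZeroDivisors_eq_zero_iff
    (det_vandermonde_X_mem_nonZeroDivisors r R)).1 (MvPolynomial.ext _ _ fun d => ?_)
  simp only [← alternant_val, coeff_alternant_X_mul hf] at h ⊢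
  obtain ⟨d, rfl⟩ := Finsupp.equivFunOnFinite.symm.surjective d
  rw [coeff_alternant_X_mul hf]
  exact sum_sign_smul_comp_eq_zero_of_forall_strictMono
    (fun c => coeff (Finsupp.equivFunOnFinite.symm c) _) h d

lemma isSymmetric_bialternant_X (a : Fin r → ℕ) :
    (bialternant (X : Fin r → MvPolynomial (Fin r) R) a).IsSymmetric := by
  intro σ
  have hX : rename σ ∘ X = (X ∘ σ : Fin r → MvPolynomial (Fin r) R) :=
    funext fun i => rename_X σ i
  rw [map_bialternant, hX, bialternant_comp_perm]

variable (R)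

/-- The functional `f ↦ [x ^ b] (∏_{i < j} (x_j - x_i) * f)` on symmetric polynomials. For
strictly increasing `b` these form the dual system of the Schur polynomials. -/
noncomputable def vandermondeCoeff (b : Fin r → ℕ) :
    Module.Dual R (symmetricSubalgebra (Fin r) R) :=
  lcoeff R (Finsupp.equivFunOnFinite.symm b) ∘ₗ LinearMap.mulLeft R (Matrix.vandermonde X).det ∘ₗ
    (symmetricSubalgebra (Fin r) R).val.toLinearMap

/-- The bialternant in the variables `X i`, as an element of the ring of symmetric polynomials. -/
noncomputable def symmetricBialternant (a : Fin r → ℕ) : symmetricSubalgebra (Fin r) R :=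
  ⟨bialternant X a, isSymmetric_bialternant_X a⟩

lemma vandermondeCoeff_symmetricBialternant {a b : Fin r → ℕ} (ha : StrictMono a)
    (hb : StrictMono b) :
    vandermondeCoeff R b (symmetricBialternant R a) = if a = b then 1 else 0 := by
  rw [← coeff_alternant_X ha hb, alternant_eq_det_vandermonde_mul_bialternant]
  rfl

variable {R}

lemma finite_setOf_vandermondeCoeff_ne_zero (f : symmetricSubalgebra (Fin r) R) :
    {b | vandermondeCoeff R b f ≠ 0}.Finite :=
  (((Matrix.vandermonde X).det * (f : MvPolynomial (Fin r) R)).support.finite_toSet.preimage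
    Finsupp.equivFunOnFinite.symm.injective.injOn).subset fun _ hb => mem_support_iff.2 hb

variable (r R) in
lemma dualBases_symmetricBialternant :
    Module.DualBases (fun a : {a : Fin r → ℕ // StrictMono a} => symmetricBialternant R a.1)
      (fun b => vandermondeCoeff R b.1) where
  eval_same a := by simp [vandermondeCoeff_symmetricBialternant R a.2 a.2]
  eval_of_ne b a hba := by
    have hab : a.1 ≠ b.1 := fun h => hba (Subtype.ext h.symm)
    simp [vandermondeCoeff_symmetricBialternant R a.2 b.2, hab]
  total {f g} h := by
    refine sub_eq_zero.1 (Subtype.ext (eq_zero_of_coeff_det_vandermonde_mul (f - g).2 ?_))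
    intro b hb
    have hfg : vandermondeCoeff R b (f - g) = 0 := by rw [map_sub, h ⟨b, hb⟩, sub_self]
    exact hfg
  finite f := (finite_setOf_vandermondeCoeff_ne_zero f).preimage Subtype.val_injective.injOn

end SymmetricPolynomials

section Coha

lemma cohaMul_eq_of_algebraMap_eq {Q : FinQuiver n} {γ₁ γ₂ : Fin n → ℕ} {f g p : PolyQ n}
    (h : algebraMap (PolyQ n) (FractionRing (PolyQ n)) p = cohaMulRat Q γ₁ γ₂ f g) :
    cohaMul Q γ₁ γ₂ f g = p := by
  have hex : ∃ p : PolyQ n,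
      algebraMap (PolyQ n) (FractionRing (PolyQ n)) p = cohaMulRat Q γ₁ γ₂ f g := ⟨p, h⟩
  rw [cohaMul, dif_pos hex]
  exact IsFractionRing.injective (PolyQ n) (FractionRing (PolyQ n)) (hex.choose_spec.trans h.symm)

lemma cohaProd_append_singleton (Q : FinQuiver n) {l : List ((Fin n → ℕ) × PolyQ n)} (hl : l ≠ [])
    (y : (Fin n → ℕ) × PolyQ n) :
    cohaProd Q (l ++ [y]) = ((cohaProd Q l).1 + y.1,
      cohaMul Q (cohaProd Q l).1 y.1 (cohaProd Q l).2 y.2) := by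
  obtain ⟨x, xs, rfl⟩ := List.exists_cons_of_ne_nil hl
  simp [cohaProd, List.foldl_append]

lemma getD_sort_image_univ {α : Type*} [LinearOrder α] {m : ℕ} {f : Fin m → α} (hf : StrictMono f)
    (i : Fin m) (d : α) : ((Finset.univ.image f).sort (· ≤ ·)).getD i d = f i := by
  have hcard : (Finset.univ.image f).card = m := by
    simp [Finset.card_image_of_injective _ hf.injective]
  have hf_eq : f = (Finset.univ.image f).orderEmbOfFin hcard :=
    Finset.orderEmbOfFin_unique hcard (by simp) hf
  rw [congrFun hf_eq i, Finset.orderEmbOfFin_apply, List.getD_eq_getElem]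
  rfl

lemma erase_range_eq_image_succAbove {r : ℕ} (k : Fin (r + 1)) :
    (Finset.range (r + 1)).erase k = Finset.univ.image (Fin.val ∘ k.succAbove) := by
  rw [← Finset.image_image, Fin.image_succAbove_univ, Finset.compl_singleton,
    Finset.image_erase Fin.val_injective]
  congr 1
  ext m
  simp [Fin.exists_iff]

lemma strictMono_val_comp_succAbove {r : ℕ} (k : Fin (r + 1)) :
    StrictMono (Fin.val ∘ k.succAbove) :=
  Fin.val_strictMono.comp (Fin.strictMono_succAbove k)

/-- The index of the variable `x_i` of `ℋ_r(A₁)` among the variables `ω_{v,j}` of `PolyQ 1`. -/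
def vertexIndex (r : ℕ) : Fin r ↪ Fin 1 × ℕ :=
  Fin.valEmbedding.trans (Function.Embedding.sectR 0 ℕ)

lemma substAlong_erase_range_X {r : ℕ} (k : Fin (r + 1)) (i : Fin r) :
    substAlong (fun _ : Fin 1 => (Finset.range (r + 1)).erase k) (X (vertexIndex r i)) =
      X (vertexIndex (r + 1) (k.succAbove i)) := by
  rw [substAlong, aeval_X, erase_range_eq_image_succAbove]
  exact congrArg (fun j => X (0, j)) (getD_sort_image_univ (strictMono_val_comp_succAbove k) i 0)

lemma substAlong_singleton_psi (k p : ℕ) :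
    substAlong (fun _ : Fin 1 => {k}) (psi p) = X (0, k) ^ p := by
  simp [substAlong, psi]

lemma interactionNum_A1 (γ₁ γ₂ : Fin 1 → ℕ) (S : Fin 1 → Finset ℕ) :
    interactionNum A1 γ₁ γ₂ S = 1 :=
  have : IsEmpty A1.Arr := inferInstanceAs (IsEmpty Empty)
  Finset.prod_of_isEmpty _

lemma shuffleCompl_erase_range {r : ℕ} (k : Fin (r + 1)) :
    shuffleCompl (fun _ => r) oneDim (fun _ => (Finset.range (r + 1)).erase k) = fun _ => {↑k} := by
  funext v
  exact Finset.sdiff_erase_self (Finset.mem_range.2 k.2)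

lemma interactionDen_erase_range {r : ℕ} (k : Fin (r + 1)) :
    interactionDen (fun _ => r) oneDim (fun _ => (Finset.range (r + 1)).erase k) =
      ∏ i : Fin r, (X (0, (k : ℕ)) - X (0, (k.succAbove i : ℕ))) := by
  rw [interactionDen, shuffleCompl_erase_range, erase_range_eq_image_succAbove]
  simp [Finset.prod_image (strictMono_val_comp_succAbove k).injective.injOn]

lemma shuffles_oneDim (r : ℕ) :
    shuffles (fun _ => r) oneDim =
      Finset.univ.image fun k : Fin (r + 1) => fun _ => (Finset.range (r + 1)).erase k := by
  ext S
  simp only [shuffles, oneDim, Fintype.mem_piFinset, Finset.mem_filter, Finset.mem_powerset,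
    Finset.mem_image, Finset.mem_univ, true_and, Fin.forall_fin_one]
  constructor
  · rintro ⟨hsub, hcard⟩
    obtain ⟨m, hm⟩ : ∃ m, Finset.range (r + 1) \ S 0 = {m} := by
      rw [← Finset.card_eq_one, Finset.card_sdiff_of_subset hsub, hcard]
      simp
    have hmr : m ∈ Finset.range (r + 1) := Finset.sdiff_subset (hm ▸ Finset.mem_singleton_self m)
    refine ⟨⟨m, Finset.mem_range.1 hmr⟩, funext fun v => ?_⟩
    rw [Subsingleton.elim v 0, Finset.erase_eq, ← hm, Finset.sdiff_sdiff_eq_self hsub]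
  · rintro ⟨k, rfl⟩
    exact ⟨Finset.erase_subset _ _, by
      rw [Finset.card_erase_of_mem (Finset.mem_range.2 k.2), Finset.card_range,
        add_tsub_cancel_right]⟩

lemma injective_erase_range (r : ℕ) :
    Function.Injective fun k : Fin (r + 1) => fun _ : Fin 1 => (Finset.range (r + 1)).erase k := by
  intro k l h
  refine Fin.ext (Finset.erase_injOn (Finset.range (r + 1)) ?_ ?_ (congrFun h 0)) <;>
    simp [Fin.is_le]

lemma substAlong_erase_range_bialternant {r : ℕ} (k : Fin (r + 1)) (a : Fin r → ℕ) :
    substAlong (fun _ : Fin 1 => (Finset.range (r + 1)).erase k)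
        (bialternant (X ∘ vertexIndex r) a) =
      bialternant (X ∘ vertexIndex (r + 1) ∘ k.succAbove) a := by
  rw [map_bialternant]
  congr 1
  funext i
  exact substAlong_erase_range_X k i

lemma cohaMul_bialternant_psi {r : ℕ} (a : Fin (r + 1) → ℕ) :
    cohaMul A1 (fun _ => r) oneDim (bialternant (X ∘ vertexIndex r) (a ∘ Fin.castSucc))
      (psi (a (Fin.last r))) = bialternant (X ∘ vertexIndex (r + 1)) a := by
  have hinj : Function.Injective
      (algebraMap (PolyQ 1) (FractionRing (PolyQ 1)) ∘ X ∘ vertexIndex (r + 1)) :=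
    (IsFractionRing.injective _ _).comp (X_injective.comp (vertexIndex (r + 1)).injective)
  refine cohaMul_eq_of_algebraMap_eq ?_
  rw [cohaMulRat, shuffles_oneDim, Finset.sum_image (injective_erase_range r).injOn,
    map_bialternant, ← sum_bialternant_mul_pow_div_prod_sub hinj a]
  refine Finset.sum_congr rfl fun k _ => ?_
  rw [substAlong_erase_range_bialternant, shuffleCompl_erase_range, substAlong_singleton_psi,
    interactionNum_A1, mul_one, interactionDen_erase_range, map_mul, map_bialternant, map_pow,
    map_prod]
  simp only [map_sub]
  rfl

lemma cohaProd_psi {r : ℕ} (a : Fin r → ℕ) :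
    cohaProd A1 (List.ofFn fun u => (oneDim, psi (a u))) =
      (fun _ => r, bialternant (X ∘ vertexIndex r) a) := by
  match r with
  | 0 => simp [cohaProd, bialternant]
  | 1 =>
    rw [bialternant_fin_one]
    rfl
  | r + 2 =>
    have hne : (List.ofFn fun u : Fin (r + 1) => (oneDim, psi (a u.castSucc))) ≠ [] := by
      simp
    have ih := cohaProd_psi (a ∘ Fin.castSucc)
    simp only [Function.comp_apply] at ih
    rw [List.ofFn_succ', List.concat_eq_append, cohaProd_append_singleton A1 hne, ih]
    exact Prod.ext rfl (cohaMul_bialternant_psi a)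

lemma cohaProdFin_psi {r : ℕ} (a : Fin r → ℕ) :
    cohaProdFin A1 (fun _ => oneDim) (fun u => psi (a u)) =
      rename (vertexIndex r) (bialternant X a) := by
  have hX : rename (R := ℚ) (vertexIndex r) ∘ X = X ∘ vertexIndex r := funext (rename_X _)
  rw [map_bialternant, hX, cohaProdFin, cohaProd_psi]

lemma rename_vertexPerm_rename_vertexIndex {r : ℕ} {σ : Equiv.Perm ℕ} {τ : Equiv.Perm (Fin r)}
    (h : ∀ i : Fin r, σ i = τ i) (v : Fin 1) (f : MvPolynomial (Fin r) ℚ) :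
    rename (vertexPerm v σ) (rename (vertexIndex r) f) =
      rename (vertexIndex r) (rename τ f) := by
  rw [rename_rename, rename_rename]
  congr 2
  funext i
  simp [vertexPerm, vertexIndex, h, Subsingleton.elim v 0]

lemma exists_perm_fin_of_forall_ne_lt {r : ℕ} {σ : Equiv.Perm ℕ} (hσ : ∀ j, σ j ≠ j → j < r) :
    ∃ τ : Equiv.Perm (Fin r), ∀ i : Fin r, σ i = τ i := by
  have hlt (i : Fin r) : σ i < r := by
    by_cases hi : σ i = i
    · exact hi.trans_lt i.2
    · exact hσ _ fun h => hi (σ.injective h)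
  have hinj : Function.Injective fun i : Fin r => (⟨σ i, hlt i⟩ : Fin r) := fun i j h =>
    Fin.ext (σ.injective (congrArg Fin.val h))
  exact ⟨Equiv.ofBijective _ (Finite.injective_iff_bijective.1 hinj), fun _ => rfl⟩

lemma symmIn_rename_vertexIndex_iff {r : ℕ} {f : MvPolynomial (Fin r) ℚ} :
    SymmIn (fun _ => r) (rename (vertexIndex r) f) ↔ f.IsSymmetric := by
  constructor
  · intro hf τ
    let σ := τ.viaEmbedding Fin.valEmbedding
    have hστ (i : Fin r) : σ i = τ i := τ.viaEmbedding_apply Fin.valEmbedding i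
    have hσ (j : ℕ) (hj : σ j ≠ j) : j < r := by
      by_contra hjr
      refine hj (τ.viaEmbedding_apply_of_notMem Fin.valEmbedding j ?_)
      rintro ⟨i, rfl⟩
      exact hjr i.2
    refine rename_injective _ (vertexIndex r).injective ?_
    rw [← rename_vertexPerm_rename_vertexIndex hστ 0, hf 0 σ hσ]
  · intro hf v σ hσ
    obtain ⟨τ, hτ⟩ := exists_perm_fin_of_forall_ne_lt hσ
    rw [rename_vertexPerm_rename_vertexIndex hτ, hf τ]

lemma Hspace_eq_map_symmetricSubalgebra (r : ℕ) :
    Hspace (fun _ : Fin 1 => r) = (symmetricSubalgebra (Fin r) ℚ).toSubmodule.map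
      (rename (vertexIndex r)).toLinearMap := by
  ext g
  constructor
  · rintro ⟨hvars, hsymm⟩
    obtain ⟨f, rfl⟩ := exists_rename_eq_of_vars_subset_range g _ (vertexIndex r).injective
      fun p hp => ⟨⟨p.2, hvars p hp⟩, Prod.ext (Subsingleton.elim _ _) rfl⟩
    exact ⟨f, symmIn_rename_vertexIndex_iff.1 hsymm, rfl⟩
  · rintro ⟨f, hf, rfl⟩
    refine ⟨fun p hp => ?_, symmIn_rename_vertexIndex_iff.2 hf⟩
    obtain ⟨i, -, rfl⟩ := Finset.mem_image.1 (vars_rename _ f hp)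
    exact i.2

end Coha

/-- The products `ψ_{a₁} * ⋯ * ψ_{a_r}`, over strictly increasing
sequences `a₁ < ⋯ < a_r` of nonnegative integers, form a `ℚ`-basis of `ℋ_r(A₁)`:
they are linearly independent and span the space of symmetric polynomials in
`x₁,…,x_r`.  In particular `ℋ(A₁)` is generated under `*` by `ℋ₁(A₁)`. -/
theorem psi_products_basis (r : ℕ) :
    LinearIndependent ℚ (fun a : {a : Fin r → ℕ // StrictMono a} =>
        cohaProdFin A1 (fun _ => oneDim) (fun u => psi (a.1 u))) ∧
      Submodule.span ℚ (Set.range (fun a : {a : Fin r → ℕ // StrictMono a} =>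
        cohaProdFin A1 (fun _ => oneDim) (fun u => psi (a.1 u)))) =
        Hspace (fun _ : Fin 1 => r) := by
  let φ : symmetricSubalgebra (Fin r) ℚ →ₗ[ℚ] PolyQ 1 :=
    (rename (vertexIndex r)).toLinearMap ∘ₗ (symmetricSubalgebra (Fin r) ℚ).toSubmodule.subtype
  have hφ : Function.Injective φ :=
    (rename_injective _ (vertexIndex r).injective).comp Subtype.val_injective
  have hrange : LinearMap.range φ = Hspace (fun _ : Fin 1 => r) := by
    rw [LinearMap.range_comp, Submodule.range_subtype, Hspace_eq_map_symmetricSubalgebra]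
  let B := (dualBases_symmetricBialternant r ℚ).basis
  have hB : (fun a : {a : Fin r → ℕ // StrictMono a} =>
      cohaProdFin A1 (fun _ => oneDim) (fun u => psi (a.1 u))) = φ ∘ B := by
    funext a
    rw [cohaProdFin_psi, Module.DualBases.coe_basis]
    rfl
  rw [hB]
  refine ⟨B.linearIndependent.map' φ (LinearMap.ker_eq_bot.2 hφ), ?_⟩
  rw [Set.range_comp, Submodule.span_image, B.span_eq, Submodule.map_top, hrange]
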